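/- Let F be a commutative ring and A a commutative F-algebra that is flat as an F-module and is generated as an F-algebra by finitely many elements a_1, …, a_m. Then TS^n_F(A) is generated as an F-algebra by the elements e_i^n(a) for 1 ≤ i ≤ n, where a ranges over the monomials a_1^{α_1}⋯a_m^{α_m} whose nonzero exponents α_1,…,α_m have greatest common divisor 1 and whose total degree satisfies α_1+⋯+α_m ≤ max(n, m(n−1)). -/

import Mathlib

open scoped TensorProduct
open PiTensorProduct

universe u v w

namespace SymmetricProduct

variable (F : Type u) [CommRing F] (A : Type v) [CommRing A] [Algebra F A] (n : ℕ)

/-- The algebra homomorphism on the `n`-fold tensor power permuting factors by `σ`. -/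
noncomputable def permHom (σ : Equiv.Perm (Fin n)) :
    (⨂[F] _ : Fin n, A) →ₐ[F] (⨂[F] _ : Fin n, A) :=
  PiTensorProduct.liftAlgHom (MultilinearMap.domDomCongr σ (PiTensorProduct.tprod F))
    (by simp [MultilinearMap.domDomCongr_apply]; rfl)
    (fun x y => by
      simp only [MultilinearMap.domDomCongr_apply]
      rw [tprod_mul_tprod]; rfl)

@[simp] lemma permHom_tprod (σ : Equiv.Perm (Fin n)) (x : Fin n → A) :
    permHom F A n σ (tprod F x) = tprod F (fun i => x (σ i)) := by
  simp [permHom]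

/-- `TS^n_F(A)`: the subalgebra of symmetric tensors in the `n`-fold tensor power of `A`. -/
noncomputable def TS : Subalgebra F (⨂[F] _ : Fin n, A) where
  carrier := {x | ∀ σ : Equiv.Perm (Fin n), permHom F A n σ x = x}
  mul_mem' := fun hx hy σ => by rw [_root_.map_mul, hx σ, hy σ]
  add_mem' := fun hx hy σ => by rw [_root_.map_add, hx σ, hy σ]
  one_mem' := fun σ => map_one _
  algebraMap_mem' := fun r σ => AlgHom.commutes _ r

/-- `e_i^n(a)`: the sum over `i`-element subsets `S` of `Fin n` of the elementary tensors
having `a` in the slots of `S` and `1` elsewhere. -/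
noncomputable def esym (i : ℕ) (a : A) : ⨂[F] _ : Fin n, A :=
  ∑ S ∈ Finset.powersetCard i (Finset.univ : Finset (Fin n)),
    tprod F (fun j => if j ∈ S then a else 1)

lemma esym_mem (i : ℕ) (a : A) : esym F A n i a ∈ TS F A n := by
  intro σ
  rw [esym, map_sum]
  simp only [permHom_tprod]
  refine Finset.sum_nbij' (fun S => S.map σ.symm.toEmbedding)
    (fun S => S.map σ.toEmbedding) ?_ ?_ ?_ ?_ ?_
  · intro S hS
    simp only [Finset.mem_powersetCard_univ, Finset.card_map] at hS ⊢
    exact hS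
  · intro S hS
    simp only [Finset.mem_powersetCard_univ, Finset.card_map] at hS ⊢
    exact hS
  · intro S hS
    ext j
    simp
  · intro S hS
    ext j
    simp
  · intro S hS
    congr 1
    funext j
    have hiff : (σ j ∈ S) ↔ (j ∈ Finset.map σ.symm.toEmbedding S) := by
      constructor
      · intro h
        exact Finset.mem_map.2 ⟨σ j, h, σ.symm_apply_apply j⟩
      · intro h
        obtain ⟨s, hs, rfl⟩ := Finset.mem_map.1 h
        simpa using hs
    simp only [hiff]

/-- `e_i^n(a)` as an element of `TS^n_F(A)`. -/
noncomputable def esymT (i : ℕ) (a : A) : TS F A n := ⟨esym F A n i a, esym_mem F A n i a⟩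

lemma tprod_const_mem (a : A) : (tprod F (fun _ : Fin n => a)) ∈ TS F A n := fun σ => by
  simp

/-- `a^{⊗ n}` as an element of `TS^n_F(A)`. -/
noncomputable def tpow (a : A) : TS F A n := ⟨tprod F (fun _ : Fin n => a), tprod_const_mem F A n a⟩

/-! Choose finitely many linear relations witnessing that a tensor `x` is symmetric. When `A` is
flat, these relations already hold in the tensor power of a finite free module mapping to `A`, so
`x` is the image of a symmetric tensor with invariant coordinates. Hence `TS^n_F(A)` is spanned by
sums of elementary tensors over orbits, an orbit being determined by the multiset of entries `≠ 1`.

The product of the orbit sums of two disjoint multisets is the orbit sum of their union plus other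
orbit sums with fewer entries `≠ 1`, so by induction every orbit sum is a polynomial in the
`e_i^n(y)`. The copies of `x ∈ A` in the `n` slots are roots of the same monic polynomial of
degree `n` with coefficients `± e_i^n(x)`, which keeps the exponents of the generators below `n`
throughout the induction. Finally `e_i^n(x^d)` is a polynomial in the `e_j^n(x)`, which allows the
gcd of the exponents to be divided out. -/

section Flatness

variable {F n} {P : Type*} [AddCommGroup P] [Module F P]

lemma exists_factor_of_lTensor_eq_zero [Module.Flat F P] {κ : Type*} [Finite κ]
    {Q : Type*} [AddCommGroup Q] [Module F Q]
    (f : (κ → F) →ₗ[F] P) (y : Q ⊗[F] (κ → F)) (hy : f.lTensor Q y = 0) :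
    ∃ (K : ℕ) (g : (κ → F) →ₗ[F] (Fin K → F)) (h : (Fin K → F) →ₗ[F] P),
      f = h ∘ₗ g ∧ g.lTensor Q y = 0 := by
  classical
  cases nonempty_fintype κ
  obtain ⟨q, rfl⟩ : ∃ q : κ → Q, y = ∑ i, q i ⊗ₜ[F] Pi.single i 1 :=
    ⟨TensorProduct.piScalarRight F F Q κ y, (TensorProduct.piScalarRight F F Q κ).injective
      (by ext i; simp [Pi.single_apply])⟩
  simp only [map_sum, LinearMap.lTensor_tmul] at hy
  obtain ⟨K, c, p, hp, hc⟩ :=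
    TensorProduct.vanishesTrivially_of_sum_tmul_eq_zero_of_rTensor_injective F
      (Module.Flat.rTensor_preserves_injective_linearMap _ (Submodule.injective_subtype _)) hy
  refine ⟨K, Fintype.linearCombination F c, Fintype.linearCombination F p, ?_, ?_⟩
  · ext i
    simp [Fintype.linearCombination_apply, hp i]
  · simp only [map_sum, LinearMap.lTensor_tmul, Fintype.linearCombination_apply_single, one_smul]
    have hcol (i : κ) : c i = ∑ j, c i j • Pi.single j 1 := by
      simpa using pi_eq_sum_univ' (c i)
    calc ∑ i, q i ⊗ₜ[F] c i
        = ∑ j, (∑ i, c i j • q i) ⊗ₜ[F] (Pi.single j 1 : Fin K → F) := by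
          simp_rw [TensorProduct.sum_tmul, TensorProduct.smul_tmul]
          rw [Finset.sum_comm]
          simp_rw [← TensorProduct.tmul_sum, ← hcol]
      _ = 0 := by simp [hc]

/-- The identification of `(Q ⊗ ⨂ⁿ M) ⊗ M` with `Q ⊗ ⨂ⁿ⁺¹ M`, used to peel off one tensor factor
in inductions on `n`. -/
noncomputable def tensorSuccEquiv (Q M : Type*) [AddCommGroup Q] [Module F Q] [AddCommGroup M]
    [Module F M] :
    (Q ⊗[F] (⨂[F] _ : Fin n, M)) ⊗[F] M ≃ₗ[F] Q ⊗[F] (⨂[F] _ : Fin (n + 1), M) :=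
  TensorProduct.assoc F _ _ _ ≪≫ₗ
    (TensorProduct.congr (.refl F _) (subsingletonEquiv (0 : Fin 1)).symm ≪≫ₗ
      TensorPower.mulEquiv).lTensor Q

lemma tensorSuccEquiv_tmul {Q M : Type*} [AddCommGroup Q] [Module F Q] [AddCommGroup M]
    [Module F M] (q : Q) (v : Fin n → M) (x : M) :
    tensorSuccEquiv Q M ((q ⊗ₜ tprod F v) ⊗ₜ x) =
      q ⊗ₜ tprod F (Fin.snoc (α := fun _ => M) v x) := by
  have happend : (fun i => Sum.elim v (fun _ : Fin 1 => x) (finSumFinEquiv.symm i)) =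
      Fin.snoc (α := fun _ => M) v x := by
    rw [← Fin.append_right_eq_snoc v fun _ => x]
    ext i
    cases i using Fin.addCases <;> simp
  simp [tensorSuccEquiv, TensorPower.mulEquiv, happend]

lemma tensorSuccEquiv_map {Q M N : Type*} [AddCommGroup Q] [Module F Q] [AddCommGroup M]
    [Module F M] [AddCommGroup N] [Module F N] (f : M →ₗ[F] N)
    (z : (Q ⊗[F] (⨂[F] _ : Fin n, M)) ⊗[F] M) :
    (PiTensorProduct.map fun _ => f).lTensor Q (tensorSuccEquiv Q M z) =
      tensorSuccEquiv Q N
        (TensorProduct.map ((PiTensorProduct.map fun _ => f).lTensor Q) f z) := by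
  suffices h : (PiTensorProduct.map fun _ => f).lTensor Q ∘ₗ (tensorSuccEquiv Q M).toLinearMap =
      (tensorSuccEquiv Q N).toLinearMap ∘ₗ
        TensorProduct.map ((PiTensorProduct.map fun _ => f).lTensor Q) f from
    LinearMap.congr_fun h z
  ext q v x
  have hsnoc : (fun k => f (Fin.snoc (α := fun _ => M) v x k)) =
      Fin.snoc (α := fun _ => N) (fun k => f (v k)) (f x) := Fin.comp_snoc ..
  simp [tensorSuccEquiv_tmul, map_tprod, hsnoc]

lemma rightComm_rTensor_lTensor {Q M N L : Type*} [AddCommGroup Q] [Module F Q]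
    [AddCommGroup M] [Module F M] [AddCommGroup N] [Module F N] [AddCommGroup L] [Module F L]
    (f : M →ₗ[F] N) (z : (Q ⊗[F] M) ⊗[F] L) :
    TensorProduct.rightComm F Q N L ((f.lTensor Q).rTensor L z) =
      f.lTensor (Q ⊗[F] L) (TensorProduct.rightComm F Q M L z) := by
  suffices h : (TensorProduct.rightComm F Q N L).toLinearMap ∘ₗ (f.lTensor Q).rTensor L =
      f.lTensor (Q ⊗[F] L) ∘ₗ (TensorProduct.rightComm F Q M L).toLinearMap from
    LinearMap.congr_fun h z
  ext
  rfl

lemma exists_factor_of_lTensor_map_eq_zero [Module.Flat F P] {κ : Type} [Finite κ]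
    (f : (κ → F) →ₗ[F] P) {Q : Type u} [AddCommGroup Q] [Module F Q]
    (y : Q ⊗[F] (⨂[F] _ : Fin n, (κ → F)))
    (hy : (PiTensorProduct.map fun _ => f).lTensor Q y = 0) :
    ∃ (K : ℕ) (g : (κ → F) →ₗ[F] (Fin K → F)) (h : (Fin K → F) →ₗ[F] P),
      f = h ∘ₗ g ∧ (PiTensorProduct.map fun _ => g).lTensor Q y = 0 := by
  induction n generalizing Q κ with
  | zero =>
    obtain ⟨K, g, h, hf, -⟩ := exists_factor_of_lTensor_eq_zero (Q := F) f 0 (map_zero _)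
    refine ⟨K, g, h, hf, ?_⟩
    rw [show (fun _ : Fin 0 => g) = fun _ => 0 ∘ₗ f from Subsingleton.elim _ _,
      PiTensorProduct.map_comp, LinearMap.lTensor_comp_apply, hy, map_zero]
  | succ n ih =>
    obtain ⟨z, rfl⟩ := (tensorSuccEquiv Q (κ → F)).surjective y
    rw [tensorSuccEquiv_map, LinearEquiv.map_eq_zero_iff,
      ← LinearMap.lTensor_comp_rTensor, LinearMap.comp_apply] at hy
    obtain ⟨K, g, h, rfl, hg⟩ := exists_factor_of_lTensor_eq_zero f _ hy
    let w := TensorProduct.map ((PiTensorProduct.map fun _ => g).lTensor Q) g z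
    have hw : ((PiTensorProduct.map fun _ => h).lTensor Q).rTensor (Fin K → F) w = 0 := by
      rwa [← LinearMap.comp_apply, LinearMap.rTensor_comp_map, ← LinearMap.lTensor_comp,
        ← PiTensorProduct.map_comp, ← LinearMap.lTensor_comp_rTensor, LinearMap.comp_apply]
    obtain ⟨L, g', h', rfl, hg'⟩ := ih h (TensorProduct.rightComm F Q _ _ w) (by
      rw [← rightComm_rTensor_lTensor, hw, map_zero])
    rw [← rightComm_rTensor_lTensor, LinearEquiv.map_eq_zero_iff] at hg'
    refine ⟨L, g' ∘ₗ g, h', LinearMap.comp_assoc _ _ _, ?_⟩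
    rw [tensorSuccEquiv_map, LinearEquiv.map_eq_zero_iff, PiTensorProduct.map_comp,
      LinearMap.lTensor_comp, TensorProduct.map_comp, LinearMap.comp_apply,
      ← LinearMap.lTensor_comp_rTensor, LinearMap.comp_apply, hg', map_zero]

lemma exists_factor_of_map_eq_zero [Module.Flat F P] {κ : Type} [Finite κ]
    (f : (κ → F) →ₗ[F] P) {τ : Type} [Finite τ] (y : τ → ⨂[F] _ : Fin n, (κ → F))
    (hy : ∀ t, PiTensorProduct.map (fun _ => f) (y t) = 0) :
    ∃ (K : ℕ) (g : (κ → F) →ₗ[F] (Fin K → F)) (h : (Fin K → F) →ₗ[F] P),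
      f = h ∘ₗ g ∧ ∀ t, PiTensorProduct.map (fun _ => g) (y t) = 0 := by
  classical
  cases nonempty_fintype τ
  obtain ⟨K, g, h, hf, hg⟩ := exists_factor_of_lTensor_map_eq_zero f (Q := τ → F)
    (∑ t, Pi.single t 1 ⊗ₜ y t) (by simp [hy])
  refine ⟨K, g, h, hf, fun t => ?_⟩
  have := congr(TensorProduct.lid F _ ((LinearMap.proj t).rTensor _ $hg))
  simpa [Pi.single_apply, ite_smul] using this

lemma exists_invariant_lift [Module.Flat F P] (x : ⨂[F] _ : Fin n, P)
    (hx : ∀ σ : Equiv.Perm (Fin n), reindex F (fun _ => P) σ x = x) :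
    ∃ (K : ℕ) (h : (Fin K → F) →ₗ[F] P) (z : ⨂[F] _ : Fin n, (Fin K → F)),
      PiTensorProduct.map (fun _ => h) z = x ∧
      ∀ σ : Equiv.Perm (Fin n), reindex F (fun _ => Fin K → F) σ z = z := by
  obtain ⟨r, c, v, rfl⟩ : ∃ (r : ℕ) (c : Fin r → F) (v : Fin r → Fin n → P),
      x = ∑ s, c s • tprod F (v s) := by
    obtain ⟨r, c, v, hv⟩ := Submodule.mem_span_set'.1
      (span_tprod_eq_top (R := F) (s := fun _ : Fin n => P) ▸ Submodule.mem_top : x ∈ _)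
    choose v' hv' using fun s => (v s).2
    exact ⟨r, c, v', by simp_rw [hv', hv]⟩
  let f := Fintype.linearCombination F fun p : Fin r × Fin n => v p.1 p.2
  let y := ∑ s, c s • tprod F fun k => (Pi.single (s, k) 1 : Fin r × Fin n → F)
  have hfy : PiTensorProduct.map (fun _ => f) y = ∑ s, c s • tprod F (v s) := by
    simp [y, f, map_tprod]
  obtain ⟨K, g, h, hf, hg⟩ := exists_factor_of_map_eq_zero f
    (fun σ : Equiv.Perm (Fin n) => reindex F (fun _ => Fin r × Fin n → F) σ y - y)
    (fun σ => by rw [map_sub, PiTensorProduct.map_reindex (fun _ => f) σ, hfy, hx σ, sub_self])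
  refine ⟨K, h, PiTensorProduct.map (fun _ => g) y, ?_, fun σ => ?_⟩
  · rw [← hfy, hf, PiTensorProduct.map_comp, LinearMap.comp_apply]
  · rw [← PiTensorProduct.map_reindex (fun _ => g) σ, ← sub_eq_zero, ← map_sub, hg σ]

lemma exists_invariant_expansion [Module.Flat F P] (x : ⨂[F] _ : Fin n, P)
    (hx : ∀ σ : Equiv.Perm (Fin n), reindex F (fun _ => P) σ x = x) :
    ∃ (K : ℕ) (b : Fin K → P) (c : (Fin n → Fin K) → F),
      (∀ (g : Fin n → Fin K) (σ : Equiv.Perm (Fin n)), c (g ∘ σ) = c g) ∧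
      x = ∑ g, c g • tprod F (b ∘ g) := by
  obtain ⟨K, h, z, rfl, hz⟩ := exists_invariant_lift x hx
  let B := Basis.piTensorProduct fun _ : Fin n => Pi.basisFun F (Fin K)
  refine ⟨K, fun j => h (Pi.single j 1), B.repr z, fun g σ => ?_, ?_⟩
  · have hB : B.coord (g ∘ σ) ∘ₗ (reindex F (fun _ => Fin K → F) σ.symm).toLinearMap =
        B.coord g := by
      refine PiTensorProduct.ext (MultilinearMap.ext fun v => ?_)
      simpa [B, Basis.piTensorProduct_repr_tprod_apply, reindex_tprod] using
        Equiv.prod_comp σ fun k => v k (g k)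
    calc B.repr z (g ∘ σ) = B.coord (g ∘ σ) (reindex F (fun _ => Fin K → F) σ.symm z) := by
          rw [hz, Module.Basis.coord_apply]
      _ = B.repr z g := congr($hB z)
  · conv_lhs => rw [← B.sum_repr z]
    simp [B, Basis.piTensorProduct_apply, map_tprod, Function.comp_def]

end Flatness

section NontrivialEntries

open scoped Finset

variable {n} {M : Type*} [MulOneClass M] [DecidableEq M]

/-- The multiset of entries different from `1` of a tuple; since the tuple has a fixed length, this
determines it up to permutation of its slots. -/
def nontrivialEntries (h : Fin n → M) : Multiset M :=
  (Finset.univ.filter (h · ≠ 1)).val.map h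

lemma mem_nontrivialEntries {h : Fin n → M} {x : M} :
    x ∈ nontrivialEntries h ↔ (∃ k, h k = x) ∧ x ≠ 1 := by
  simp only [nontrivialEntries, Multiset.mem_map, Finset.mem_val, Finset.mem_filter,
    Finset.mem_univ, true_and]
  exact ⟨fun ⟨k, hk, hx⟩ => ⟨⟨k, hx⟩, hx ▸ hk⟩, fun ⟨⟨k, hx⟩, hk⟩ => ⟨k, hx ▸ hk, hx⟩⟩

lemma forall_mem_nontrivialEntries {S : Submonoid M} {h : Fin n → M} :
    (∀ x ∈ nontrivialEntries h, x ∈ S) ↔ ∀ k, h k ∈ S := by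
  refine ⟨fun hS k => ?_, fun hS x hx => ?_⟩
  · by_cases hk : h k = 1
    · exact hk ▸ S.one_mem
    · exact hS _ (mem_nontrivialEntries.2 ⟨⟨k, rfl⟩, hk⟩)
  · obtain ⟨⟨k, rfl⟩, -⟩ := mem_nontrivialEntries.1 hx
    exact hS k

lemma count_nontrivialEntries (h : Fin n → M) {x : M} (hx : x ≠ 1) :
    (nontrivialEntries h).count x = #{k | h k = x} := by
  rw [nontrivialEntries, Multiset.count_map, ← Finset.filter_val, Finset.filter_filter,
    Finset.card_val]
  congr 1
  grind

lemma card_nontrivialEntries (h : Fin n → M) :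
    (nontrivialEntries h).card = #{k | h k ≠ 1} :=
  Multiset.card_map _ _

lemma nontrivialEntries_comp_perm (h : Fin n → M) (σ : Equiv.Perm (Fin n)) :
    nontrivialEntries (h ∘ σ) = nontrivialEntries h := by
  have hσ : (Finset.univ.filter (h · ≠ 1)) =
      (Finset.univ.filter ((h ∘ σ) · ≠ 1)).map σ.toEmbedding := by
    ext k
    simp
  rw [nontrivialEntries, nontrivialEntries, hσ, Finset.map_val, Multiset.map_map]
  rfl

lemma nontrivialEntries_eq_iff {g h : Fin n → M} :
    nontrivialEntries h = nontrivialEntries g ↔ ∃ σ : Equiv.Perm (Fin n), h = g ∘ σ := by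
  refine ⟨fun heq => ?_, ?_⟩
  · have hcard (x : M) : #{k | h k = x} = #{k | g k = x} := by
      rcases eq_or_ne x 1 with rfl | hx
      · have hne : #{k | h k ≠ 1} = #{k | g k ≠ 1} := by
          rw [← card_nontrivialEntries, heq, card_nontrivialEntries]
        have hsum (f : Fin n → M) := Finset.card_filter_add_card_filter_not (s := .univ) (f · = 1)
        have := hsum h
        have := hsum g
        lia
      · rw [← count_nontrivialEntries h hx, heq, count_nontrivialEntries g hx]
    let e (x : M) : {k // h k = x} ≃ {k // g k = x} := Fintype.equivOfCardEq <| by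
      rw [Fintype.card_subtype, Fintype.card_subtype, hcard]
    exact ⟨Equiv.ofFiberEquiv e, funext fun k => (Equiv.ofFiberEquiv_map e k).symm⟩
  · rintro ⟨σ, rfl⟩
    exact nontrivialEntries_comp_perm g σ

lemma card_nontrivialEntries_le {g h : Fin n → M} (hgh : ∀ k, g k = 1 → h k = 1) :
    (nontrivialEntries h).card ≤ (nontrivialEntries g).card := by
  rw [card_nontrivialEntries, card_nontrivialEntries]
  exact Finset.card_le_card (Finset.monotone_filter_right _ fun k _ => mt (hgh k))

lemma card_nontrivialEntries_mul_lt {u v : Fin n → M} (h : ∃ k, u k ≠ 1 ∧ v k ≠ 1) :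
    (nontrivialEntries (u * v)).card < (nontrivialEntries u).card + (nontrivialEntries v).card := by
  simp only [card_nontrivialEntries]
  rw [← Finset.card_union_add_card_inter, ← Finset.filter_or, ← Finset.filter_and]
  have hunion : #{k | (u * v) k ≠ 1} ≤ #{k | u k ≠ 1 ∨ v k ≠ 1} :=
    Finset.card_le_card (Finset.monotone_filter_right _ fun k _ hk => by
      contrapose! hk
      rw [Pi.mul_apply, hk.1, hk.2, mul_one])
  have hinter : 0 < #{k | u k ≠ 1 ∧ v k ≠ 1} :=
    Finset.card_pos.2 (Finset.filter_nonempty_iff.2 (by simpa using h))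
  lia

lemma nontrivialEntries_mul {u v : Fin n → M} (h : ∀ k, u k = 1 ∨ v k = 1) :
    nontrivialEntries (u * v) = nontrivialEntries u + nontrivialEntries v := by
  have hdisj : Disjoint (Finset.univ.filter (u · ≠ 1)) (Finset.univ.filter (v · ≠ 1)) :=
    Finset.disjoint_filter.2 fun k _ hu hv => (h k).elim hu hv
  have hunion : Finset.univ.filter ((u * v) · ≠ 1) =
      (Finset.univ.filter (u · ≠ 1)).disjUnion (Finset.univ.filter (v · ≠ 1)) hdisj := by
    ext k
    rcases h k with hk | hk <;> simp [hk]
  rw [nontrivialEntries, hunion, Finset.disjUnion_val, Multiset.map_add]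
  congr 1 <;> refine Multiset.map_congr rfl fun k hk => ?_
  · rw [Pi.mul_apply, (h k).resolve_left ((Finset.mem_filter_univ k).1 hk), mul_one]
  · rw [Pi.mul_apply, (h k).resolve_right ((Finset.mem_filter_univ k).1 hk), one_mul]

lemma nontrivialEntries_ite (h : Fin n → M) (p : M → Prop) [DecidablePred p] :
    nontrivialEntries (fun k => if p (h k) then h k else 1) = (nontrivialEntries h).filter p := by
  rw [nontrivialEntries, nontrivialEntries, Multiset.filter_map, ← Finset.filter_val,
    Finset.filter_filter]
  have hfilter : Finset.univ.filter (fun k => (if p (h k) then h k else 1) ≠ 1) =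
      Finset.univ.filter (fun k => h k ≠ 1 ∧ (p ∘ h) k) := by
    ext k
    simp [and_comm]
  rw [hfilter]
  exact Multiset.map_congr rfl fun k hk => if_pos ((Finset.mem_filter_univ k).1 hk).2

/-- The tuples whose entries different from `1` form the multiset `μ`. -/
def arrangements (n : ℕ) (μ : Multiset M) : Finset (Fin n → M) :=
  (Fintype.piFinset fun _ => insert 1 μ.toFinset).filter (nontrivialEntries · = μ)

lemma mem_arrangements {μ : Multiset M} {h : Fin n → M} :
    h ∈ arrangements n μ ↔ nontrivialEntries h = μ := by
  rw [arrangements, Finset.mem_filter, Fintype.mem_piFinset, and_iff_right_iff_imp]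
  rintro rfl k
  simpa [mem_nontrivialEntries] using em _

lemma sum_arrangements_add {N : Type*} [AddCommMonoid N] {μ ν : Multiset M} (hμν : Disjoint μ ν)
    (f : (Fin n → M) → N) :
    ∑ p ∈ arrangements n μ ×ˢ arrangements n ν with ∀ k, p.1 k = 1 ∨ p.2 k = 1, f (p.1 * p.2) =
      ∑ h ∈ arrangements n (μ + ν), f h := by
  have hfilter_mem : (μ + ν).filter (· ∈ μ) = μ := by
    rw [Multiset.filter_add, Multiset.filter_eq_self.2 fun _ => id, Multiset.filter_eq_nil.2
      fun x hx hx' => Multiset.disjoint_left.1 hμν hx' hx, add_zero]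
  have hfilter_notMem : (μ + ν).filter (· ∉ μ) = ν := by
    rw [Multiset.filter_add, Multiset.filter_eq_nil.2 fun _ hx => not_not_intro hx,
      Multiset.filter_eq_self (p := (· ∉ μ)) |>.2
        fun x hx hx' => Multiset.disjoint_left.1 hμν hx' hx, zero_add]
  refine Finset.sum_nbij' (fun p => p.1 * p.2)
    (fun h => (fun k => if h k ∈ μ then h k else 1, fun k => if h k ∉ μ then h k else 1))
    ?_ ?_ ?_ ?_ fun _ _ => rfl
  · rintro ⟨u, v⟩ huv
    simp only [Finset.mem_filter, Finset.mem_product, mem_arrangements] at huv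
    rw [mem_arrangements, nontrivialEntries_mul huv.2, huv.1.1, huv.1.2]
  · intro h hh
    rw [mem_arrangements] at hh
    simp only [Finset.mem_filter, Finset.mem_product, mem_arrangements]
    refine ⟨⟨?_, ?_⟩, by grind⟩
    · rw [nontrivialEntries_ite h (· ∈ μ), hh, hfilter_mem]
    · rw [nontrivialEntries_ite h (· ∉ μ), hh, hfilter_notMem]
  · rintro ⟨u, v⟩ huv
    simp only [Finset.mem_filter, Finset.mem_product, mem_arrangements] at huv
    obtain ⟨⟨rfl, rfl⟩, huv⟩ := huv
    have hu (k : Fin n) (hk : u k ≠ 1) : u k ∈ nontrivialEntries u :=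
      mem_nontrivialEntries.2 ⟨⟨k, rfl⟩, hk⟩
    have hv (k : Fin n) (hk : v k ≠ 1) : v k ∉ nontrivialEntries u := fun hk' =>
      Multiset.disjoint_left.1 hμν hk' (mem_nontrivialEntries.2 ⟨⟨k, rfl⟩, hk⟩)
    refine Prod.ext (funext fun k => ?_) (funext fun k => ?_)
    all_goals
      rcases huv k with hk | hk <;> simp only [Pi.mul_apply, hk, one_mul, mul_one] <;> grind
  · intro h _
    ext k
    by_cases hk : h k ∈ μ <;> simp [hk]

end NontrivialEntries

section OrbitSums

open scoped Finset

variable {F A n}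

variable (F A n) in
/-- The algebra map sending `x` to the family whose `k`-th member is the elementary tensor with `x`
in slot `k` and `1` elsewhere. Relations between elements of its image hold in all slots with the
same coefficients. -/
noncomputable def slots : A →ₐ[F] (Fin n → ⨂[F] _ : Fin n, A) :=
  AlgHom.pi fun k => singleAlgHom (A := fun _ => A) k

lemma tprod_eq_prod_slots (f : Fin n → A) : tprod F f = ∏ k, slots F A n (f k) k := by
  have hf : f = ∏ k, Pi.mulSingle k (f k) := (Finset.univ_prod_mulSingle f).symm
  conv_lhs => rw [hf]
  exact map_prod (tprodMonoidHom F) _ _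

lemma tprod_eq_sum_of_slots_eq {R : Subalgebra F (⨂[F] _ : Fin n, A)} {f : Fin n → A}
    {ρ : Fin n → A →₀ R}
    (hρ : ∀ k, Finsupp.linearCombination R (slots F A n) (ρ k) = slots F A n (f k))
    {t : Finset A} (ht : ∀ k, (ρ k).support ⊆ t) :
    tprod F f = ∑ h ∈ Fintype.piFinset fun _ => t, (∏ k, ρ k (h k) : R) * tprod F h := by
  have hslot (k : Fin n) : slots F A n (f k) k = ∑ x ∈ t, (ρ k x : ⨂[F] _ : Fin n, A) *
      slots F A n x k := by
    rw [← hρ k, Finsupp.linearCombination_apply, Finsupp.sum_of_support_subset _ (ht k) _ (by simp),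
      Finset.sum_apply]
    rfl
  simp only [tprod_eq_prod_slots, hslot, Finset.prod_univ_sum, Finset.prod_mul_distrib,
    SubmonoidClass.coe_finsetProd]

variable [DecidableEq A]

variable (F n) in
/-- The sum of the elementary tensors whose entries different from `1` form the multiset `μ`. -/
noncomputable def orbitSum (μ : Multiset A) : ⨂[F] _ : Fin n, A :=
  ∑ h ∈ arrangements n μ, tprod F h

lemma orbitSum_zero : orbitSum F n (0 : Multiset A) = 1 := by
  have h : arrangements n (0 : Multiset A) = {1} := by
    ext h
    simp [mem_arrangements, nontrivialEntries, funext_iff]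
  rw [orbitSum, h, Finset.sum_singleton]
  rfl

lemma orbitSum_replicate {y : A} (hy : y ≠ 1) (i : ℕ) :
    orbitSum F n (Multiset.replicate i y) = esym F A n i y := by
  have hent (S : Finset (Fin n)) :
      nontrivialEntries (fun k => if k ∈ S then y else 1) = Multiset.replicate #S y := by
    have hS : Finset.univ.filter (fun k => (if k ∈ S then y else 1) ≠ 1) = S := by
      ext k
      simp [hy]
    rw [nontrivialEntries, hS]
    exact (Multiset.map_congr rfl fun k hk => if_pos hk).trans (Multiset.map_const' _ _)
  refine (Finset.sum_nbij (fun S k => if k ∈ S then y else 1) ?_ ?_ ?_ fun _ _ => rfl).symm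
  · intro S hS
    rw [mem_arrangements, hent, (Finset.mem_powersetCard.1 hS).2]
  · intro S _ T _ hST
    ext k
    have := congrFun hST k
    by_cases hS : k ∈ S <;> by_cases hT : k ∈ T <;> simp_all [eq_comm]
  · intro h hh
    rw [Finset.mem_coe, mem_arrangements] at hh
    have hval : (fun k => if k ∈ Finset.univ.filter (h · = y) then y else 1) = h := by
      ext k
      by_cases hk : h k = 1
      · simp [hk, hy.symm]
      · have := mem_nontrivialEntries.2 ⟨⟨k, rfl⟩, hk⟩
        rw [hh] at this
        simp [Multiset.eq_of_mem_replicate this]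
    refine ⟨_, ?_, hval⟩
    rw [Finset.mem_coe, Finset.mem_powersetCard]
    refine ⟨Finset.subset_univ _, ?_⟩
    simpa [hh] using congr(($(hent (Finset.univ.filter (h · = y)))).card).symm.trans
      congr((nontrivialEntries $hval).card)

lemma orbitSum_mul {μ ν : Multiset A} (hμν : Disjoint μ ν) :
    orbitSum F n μ * orbitSum F n ν = orbitSum F n (μ + ν) +
      ∑ p ∈ arrangements n μ ×ˢ arrangements n ν with ∃ k, p.1 k ≠ 1 ∧ p.2 k ≠ 1,
        tprod F (p.1 * p.2) := by
  rw [orbitSum, orbitSum, Finset.sum_mul_sum, ← Finset.sum_product',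
    ← Finset.sum_filter_not_add_sum_filter _ (fun p => ∃ k, p.1 k ≠ 1 ∧ p.2 k ≠ 1)]
  simp only [tprod_mul_tprod]
  congr 1
  rw [orbitSum, ← sum_arrangements_add hμν]
  refine Finset.sum_congr (Finset.filter_congr fun p _ => ?_) fun _ _ => rfl
  simp only [not_exists, not_and_or, not_not]

variable (R : Subalgebra F (⨂[F] _ : Fin n, A))

lemma sum_mul_tprod_mem (s : Finset (Fin n → A))
    (hs : ∀ h ∈ s, ∀ σ : Equiv.Perm (Fin n), h ∘ σ ∈ s)
    (C : (Fin n → A) → R) (hC : ∀ h (σ : Equiv.Perm (Fin n)), C (h ∘ σ) = C h)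
    (hR : ∀ h ∈ s, C h ≠ 0 → orbitSum F n (nontrivialEntries h) ∈ R) :
    ∑ h ∈ s, C h * tprod F h ∈ R := by
  rw [← Finset.sum_fiberwise_of_maps_to (g := nontrivialEntries)
    (t := s.image nontrivialEntries) fun _ => Finset.mem_image_of_mem _]
  refine sum_mem fun μ hμ => ?_
  obtain ⟨g, hg, rfl⟩ := Finset.mem_image.1 hμ
  have horbit : s.filter (nontrivialEntries · = nontrivialEntries g) =
      arrangements n (nontrivialEntries g) := by
    ext h
    rw [Finset.mem_filter, mem_arrangements, and_iff_right_iff_imp, nontrivialEntries_eq_iff]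
    rintro ⟨σ, rfl⟩
    exact hs g hg σ
  have hsum : ∑ h ∈ arrangements n (nontrivialEntries g), C h * tprod F h =
      C g * orbitSum F n (nontrivialEntries g) := by
    rw [orbitSum, Finset.mul_sum]
    refine Finset.sum_congr rfl fun h hh => ?_
    obtain ⟨σ, rfl⟩ := nontrivialEntries_eq_iff.1 (mem_arrangements.1 hh)
    rw [hC]
  rw [horbit, hsum]
  rcases eq_or_ne (C g) 0 with h0 | h0
  · simp [h0]
  · exact mul_mem (C g).2 (hR g hg h0)

/-- Relations between slot families may be substituted into every factor: as `C` is invariant, the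
coefficients of the result are constant on orbits. -/
lemma sum_mul_tprod_comp_mem {Y : Type*} (s : Finset (Fin n → Y))
    (hs : ∀ g ∈ s, ∀ σ : Equiv.Perm (Fin n), g ∘ σ ∈ s)
    (C : (Fin n → Y) → R) (hC : ∀ g (σ : Equiv.Perm (Fin n)), C (g ∘ σ) = C g)
    (b : Y → A) (ρ : Y → A →₀ R)
    (hρ : ∀ g ∈ s, ∀ k, Finsupp.linearCombination R (slots F A n) (ρ (g k)) = slots F A n (b (g k)))
    (hR : ∀ g ∈ s, ∀ h : Fin n → A, (∀ k, h k ∈ (ρ (g k)).support) →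
      orbitSum F n (nontrivialEntries h) ∈ R) :
    ∑ g ∈ s, C g * tprod F (b ∘ g) ∈ R := by
  let t : Finset A := s.biUnion fun g => Finset.univ.biUnion fun k => (ρ (g k)).support
  let D (h : Fin n → A) : R := ∑ g ∈ s, C g * ∏ k, ρ (g k) (h k)
  have hexpand : ∑ g ∈ s, C g * tprod F (b ∘ g) =
      ∑ h ∈ Fintype.piFinset fun _ => t, D h * tprod F h := by
    simp only [D, AddSubmonoidClass.coe_finsetSum, Finset.sum_mul]
    rw [Finset.sum_comm]
    refine Finset.sum_congr rfl fun g hg => ?_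
    rw [tprod_eq_sum_of_slots_eq (f := b ∘ g) (hρ g hg) (t := t) fun k x hx => Finset.mem_biUnion.2
      ⟨g, hg, Finset.mem_biUnion.2 ⟨k, Finset.mem_univ k, hx⟩⟩, Finset.mul_sum]
    simp only [MulMemClass.coe_mul, mul_assoc]
  rw [hexpand]
  refine sum_mul_tprod_mem R _ (fun h hh σ => ?_) D (fun h σ => ?_) fun h _ hD => ?_
  · rw [Fintype.mem_piFinset] at hh ⊢
    exact fun k => hh (σ k)
  · refine Finset.sum_nbij' (· ∘ σ.symm) (· ∘ σ) (fun g hg => hs g hg _) (fun g hg => hs g hg _)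
      (fun g _ => by ext; simp) (fun g _ => by ext; simp) fun g _ => ?_
    rw [hC, ← Equiv.prod_comp σ fun k => ρ ((g ∘ σ.symm) k) (h k)]
    simp
  · obtain ⟨g, hg, hne⟩ := Finset.exists_ne_zero_of_sum_ne_zero hD
    refine hR g hg h fun k => Finsupp.mem_support_iff.2 fun h0 => hne ?_
    rw [Finset.prod_eq_zero (Finset.mem_univ k) h0, mul_zero]

end OrbitSums

section OrbitReduction

variable {F A n} [DecidableEq A] {R : Subalgebra F (⨂[F] _ : Fin n, A)}

lemma orbitSum_add_mem {S : Submonoid A} {μ ν : Multiset A} (hμν : Disjoint μ ν)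
    (hμ : orbitSum F n μ ∈ R) (hν : orbitSum F n ν ∈ R)
    (hμS : ∀ x ∈ μ, x ∈ S) (hνS : ∀ x ∈ ν, x ∈ S)
    (hR : ∀ ξ : Multiset A, ξ.card < μ.card + ν.card → (∀ x ∈ ξ, x ∈ S) → orbitSum F n ξ ∈ R) :
    orbitSum F n (μ + ν) ∈ R := by
  rw [eq_sub_of_add_eq (orbitSum_mul hμν).symm]
  refine sub_mem (mul_mem hμ hν) ?_
  let e : (Fin n → A) × (Fin n → A) ≃ (Fin n → A × A) := (Equiv.arrowProdEquivProdArrow ..).symm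
  let overlaps := {p ∈ arrangements n μ ×ˢ arrangements n ν | ∃ k, p.1 k ≠ 1 ∧ p.2 k ≠ 1}
  have hmem (g : Fin n → A × A) : g ∈ overlaps.map e.toEmbedding ↔
      (nontrivialEntries (Prod.fst ∘ g) = μ ∧ nontrivialEntries (Prod.snd ∘ g) = ν) ∧
        ∃ k, (g k).1 ≠ 1 ∧ (g k).2 ≠ 1 := by
    rw [Finset.mem_map_equiv, Finset.mem_filter, Finset.mem_product, mem_arrangements,
      mem_arrangements]
    rfl
  have hsum := sum_mul_tprod_comp_mem R (overlaps.map e.toEmbedding) (fun g hg σ => ?_)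
    (fun _ => 1) (fun _ _ => rfl) (fun p => p.1 * p.2) (fun p => Finsupp.single (p.1 * p.2) 1)
    (fun _ _ _ => by rw [Finsupp.linearCombination_single, one_smul]) (fun g hg h hh => ?_)
  · simp only [OneMemClass.coe_one, one_mul, Finset.sum_map] at hsum
    exact hsum
  · rw [hmem] at hg ⊢
    rw [← Function.comp_assoc, ← Function.comp_assoc, nontrivialEntries_comp_perm,
      nontrivialEntries_comp_perm]
    exact hg.imp_right fun ⟨k, hk⟩ => ⟨σ.symm k, by simpa using hk⟩
  · obtain ⟨⟨rfl, rfl⟩, hne⟩ := (hmem g).1 hg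
    obtain rfl : h = (Prod.fst ∘ g) * (Prod.snd ∘ g) := funext fun k =>
      Finset.mem_singleton.1 (Finsupp.support_single_subset (hh k))
    exact hR _ (card_nontrivialEntries_mul_lt hne) <| forall_mem_nontrivialEntries.2 fun k =>
      mul_mem (forall_mem_nontrivialEntries.1 hμS k) (forall_mem_nontrivialEntries.1 hνS k)

lemma orbitSum_mem_of_slots_mem_span {B : Set A} {μ : Multiset A}
    (hμ : ∀ x ∈ μ, slots F A n x ∈ Submodule.span R (slots F A n '' B))
    (hR : ∀ ξ : Multiset A, ξ.card ≤ μ.card → (∀ x ∈ ξ, x ∈ B ∧ x ≠ 1) → orbitSum F n ξ ∈ R) :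
    orbitSum F n μ ∈ R := by
  have hexists (x : A) : ∃ l : A →₀ R,
      (x ∈ μ ∨ x = 1 → Finsupp.linearCombination R (slots F A n) l = slots F A n x) ∧
        ∀ y ∈ l.support, (x = 1 → y = 1) ∧ (y = 1 ∨ y ∈ B) := by
    rcases eq_or_ne x 1 with rfl | hx
    · refine ⟨Finsupp.single 1 1, fun _ => by simp, fun y hy => ?_⟩
      have := Finset.mem_singleton.1 (Finsupp.support_single_subset hy)
      exact ⟨fun _ => this, .inl this⟩
    · by_cases hxμ : x ∈ μ
      · obtain ⟨l, hlB, hl⟩ := (Finsupp.mem_span_image_iff_linearCombination R).1 (hμ x hxμ)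
        exact ⟨l, fun _ => hl, fun y hy => ⟨fun h => absurd h hx, .inr (hlB hy)⟩⟩
      · exact ⟨0, fun h => (h.elim hxμ hx).elim, by simp⟩
  choose ρ hρ hρB using hexists
  have hsum := sum_mul_tprod_comp_mem R (arrangements n μ)
    (fun g hg σ => by rwa [mem_arrangements, nontrivialEntries_comp_perm, ← mem_arrangements])
    (fun _ => 1) (fun _ _ => rfl) id ρ (fun g hg k => hρ _ ?_) (fun g hg h hh => hR _ ?_ ?_)
  · simpa only [OneMemClass.coe_one, one_mul, Function.id_comp, orbitSum] using hsum
  · rw [← mem_arrangements.1 hg, mem_nontrivialEntries]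
    exact (em (g k = 1)).symm.imp_left fun hk => ⟨⟨k, rfl⟩, hk⟩
  · rw [← mem_arrangements.1 hg]
    exact card_nontrivialEntries_le fun k => (hρB _ _ (hh k)).1
  · intro x hx
    obtain ⟨⟨k, rfl⟩, hk⟩ := mem_nontrivialEntries.1 hx
    exact ⟨(hρB _ _ (hh k)).2.resolve_left hk, hk⟩

lemma orbitSum_mem {S : Submonoid A} {B : Set A} (hBS : B ⊆ S)
    (hspan : ∀ x ∈ S, slots F A n x ∈ Submodule.span R (slots F A n '' B))
    (hB : ∀ y ∈ B, y ≠ 1 → ∀ i, esym F A n i y ∈ R) (μ : Multiset A) (hμ : ∀ x ∈ μ, x ∈ S) :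
    orbitSum F n μ ∈ R := by
  induction h : μ.card using Nat.strong_induction_on generalizing μ with
  | _ m ih =>
  subst h
  refine orbitSum_mem_of_slots_mem_span (fun x hx => hspan x (hμ x hx)) fun ξ hξμ hξB => ?_
  obtain rfl | ⟨y, hy⟩ := ξ.empty_or_exists_mem
  · rw [orbitSum_zero]
    exact one_mem R
  have hfilter : ξ.filter (· = y) + ξ.filter (· ≠ y) = ξ := Multiset.filter_add_not _ _
  have hcard : (ξ.filter (· = y)).card + (ξ.filter (· ≠ y)).card = ξ.card := by
    rw [← Multiset.card_add, hfilter]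
  have hpos : 0 < (ξ.filter (· = y)).card :=
    Multiset.card_pos_iff_exists_mem.2 ⟨y, Multiset.mem_filter.2 ⟨hy, rfl⟩⟩
  have hξS (x : A) (hx : x ∈ ξ) : x ∈ S := hBS (hξB x hx).1
  have hfilterS (p : A → Prop) [DecidablePred p] (x : A) (hx : x ∈ ξ.filter p) : x ∈ S :=
    hξS x (Multiset.mem_of_mem_filter hx)
  rw [← hfilter]
  refine orbitSum_add_mem (Multiset.disjoint_left.2 fun hx hx' => ?_) ?_
    (ih _ (by lia) _ (hfilterS _) rfl) (hfilterS _) (hfilterS _)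
    fun ζ hζ hζS => ih _ (by lia) ζ hζS rfl
  · exact (Multiset.mem_filter.1 hx').2 (Multiset.mem_filter.1 hx).2
  · rw [Multiset.filter_eq', orbitSum_replicate (hξB y hy).2]
    exact hB y (hξB y hy).1 (hξB y hy).2 _

end OrbitReduction

section PowerReduction

variable {F A n} {R : Subalgebra F (⨂[F] _ : Fin n, A)}

lemma esym_eq_sum_prod_slots (i : ℕ) (x : A) :
    esym F A n i x = ∑ s ∈ Finset.univ.powersetCard i, ∏ k ∈ s, slots F A n x k := by
  refine Finset.sum_congr rfl fun s _ => ?_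
  have h (k : Fin n) : slots F A n (if k ∈ s then x else 1) k =
      if k ∈ s then slots F A n x k else 1 := by
    split_ifs <;> simp
  rw [tprod_eq_prod_slots, Finset.prod_congr rfl fun k _ => h k, Finset.prod_ite_mem,
    Finset.univ_inter]

lemma esym_eq_aeval_esymm (i : ℕ) (x : A) :
    esym F A n i x = MvPolynomial.aeval (slots F A n x) (MvPolynomial.esymm (Fin n) F i) := by
  rw [esym_eq_sum_prod_slots, MvPolynomial.aeval_esymm_eq_multiset_esymm, Finset.esymm_map_val]

lemma esym_pow_mem {x : A} (hx : ∀ i, 1 ≤ i → i ≤ n → esym F A n i x ∈ R) (d i : ℕ) :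
    esym F A n i (x ^ d) ∈ R := by
  have hsymm : (MvPolynomial.expand d (MvPolynomial.esymm (Fin n) F i)).IsSymmetric := fun σ => by
    rw [MvPolynomial.rename_expand, MvPolynomial.esymm_isSymmetric]
  obtain ⟨q, hq⟩ := MvPolynomial.esymmAlgHom_surjective F (Fintype.card_fin n).le ⟨_, hsymm⟩
  have hq' : MvPolynomial.aeval (fun l : Fin n => MvPolynomial.esymm (Fin n) F (l + 1)) q =
      MvPolynomial.expand d (MvPolynomial.esymm (Fin n) F i) :=
    (MvPolynomial.esymmAlgHom_apply ..).symm.trans congr(($hq).val)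
  have hpow : esym F A n i (x ^ d) =
      MvPolynomial.aeval (fun l : Fin n => esym F A n (l + 1) x) q := by
    calc esym F A n i (x ^ d)
        = MvPolynomial.aeval (slots F A n x)
            (MvPolynomial.expand d (MvPolynomial.esymm (Fin n) F i)) := by
          rw [esym_eq_aeval_esymm, map_pow, MvPolynomial.expand, MvPolynomial.aeval_bind₁]
          simp only [map_pow, MvPolynomial.aeval_X]
          rfl
      _ = _ := by
          simp only [← hq', ← AlgHom.comp_apply, MvPolynomial.comp_aeval, ← esym_eq_aeval_esymm]
  have hadjoin : esym F A n i (x ^ d) ∈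
      Algebra.adjoin F (Set.range fun l : Fin n => esym F A n (l + 1) x) := by
    rw [hpow, Algebra.adjoin_range_eq_range_aeval]
    exact ⟨q, rfl⟩
  exact Algebra.adjoin_le (Set.range_subset_iff.2 fun l => hx _ (by lia) (by lia)) hadjoin

lemma slots_pow_eq (x : A) :
    slots F A n x ^ n = -∑ j ∈ Finset.range n,
      ((-1) ^ (j + 1) * esym F A n (j + 1) x) • slots F A n x ^ (n - (j + 1)) := by
  funext k
  have hesymm (j : ℕ) : (Finset.univ.val.map (slots F A n x)).esymm j = esym F A n j x := by
    rw [esym_eq_sum_prod_slots, Finset.esymm_map_val]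
  have hroot : (((Finset.univ.val.map (slots F A n x)).map fun t =>
      Polynomial.X - Polynomial.C t).prod).eval (slots F A n x k) = 0 := by
    rw [Polynomial.eval_multiset_prod]
    refine Multiset.prod_eq_zero ?_
    simp only [Multiset.map_map, Multiset.mem_map]
    exact ⟨k, Finset.mem_univ_val k, by simp⟩
  rw [Multiset.prod_X_sub_X_eq_sum_esymm, Polynomial.eval_finsetSum, Multiset.card_map,
    Finset.card_val, Finset.card_univ, Fintype.card_fin, Finset.sum_range_succ'] at hroot
  simp only [hesymm, Polynomial.eval_mul, Polynomial.eval_pow, Polynomial.eval_neg,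
    Polynomial.eval_one, Polynomial.eval_C, Polynomial.eval_X] at hroot
  have hzero : esym F A n 0 x = 1 := by simp [esym_eq_sum_prod_slots]
  rw [hzero, pow_zero, one_mul, one_mul, Nat.sub_zero] at hroot
  rw [Pi.neg_apply, Finset.sum_apply, Pi.pow_apply]
  simpa only [Pi.smul_apply, Pi.pow_apply, smul_eq_mul, mul_assoc] using
    eq_neg_of_add_eq_zero_right hroot

lemma slots_pow_mem_span {x : A} (hx : ∀ i, 1 ≤ i → i ≤ n → esym F A n i x ∈ R) :
    slots F A n x ^ n ∈ Submodule.span R ((slots F A n x ^ ·) '' Set.Iio n) := by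
  rw [slots_pow_eq]
  refine neg_mem (sum_mem fun j hj => ?_)
  rw [Finset.mem_range] at hj
  exact Submodule.smul_mem _ (⟨_, mul_mem (pow_mem (neg_mem (one_mem R)) _)
    (hx (j + 1) (by lia) (by lia))⟩ : R) (Submodule.subset_span ⟨_, by grind, rfl⟩)

end PowerReduction

section SpanOfPowers

variable {n} {R B : Type*} [CommSemiring R] [CommSemiring B] [Algebra R B]

lemma pow_mem_span_pow_image_Iio {y : B}
    (hy : y ^ n ∈ Submodule.span R ((y ^ ·) '' Set.Iio n)) (d : ℕ) :
    y ^ d ∈ Submodule.span R ((y ^ ·) '' Set.Iio n) := by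
  set N := Submodule.span R ((y ^ ·) '' Set.Iio n)
  have hle {l : ℕ} (hl : l ≤ n) : y ^ l ∈ N := by
    obtain hl | rfl := hl.lt_or_eq
    · exact Submodule.subset_span ⟨l, hl, rfl⟩
    · exact hy
  have hmul : N ≤ N.comap (LinearMap.mulLeft R y) := Submodule.span_le.2 <| by
    rintro _ ⟨l, hl, rfl⟩
    rw [SetLike.mem_coe, Submodule.mem_comap, LinearMap.mulLeft_apply, ← pow_succ']
    exact hle hl
  induction d with
  | zero => exact hle n.zero_le
  | succ d ih => exact pow_succ' y d ▸ hmul ih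

lemma finsuppProd_pow_mem_span {ι : Type*} {y : ι → B}
    (hy : ∀ j, y j ^ n ∈ Submodule.span R ((y j ^ ·) '' Set.Iio n)) (α : ι →₀ ℕ) :
    α.prod (fun j d => y j ^ d) ∈ Submodule.span R
      {x | ∃ β : ι →₀ ℕ, (∀ j ∈ β.support, β j < n) ∧ x = β.prod fun j d => y j ^ d} := by
  have hprod : α.prod (fun j d => y j ^ d) ∈
      ∏ j ∈ α.support, Submodule.span R ((y j ^ ·) '' Set.Iio n) :=
    Finset.prod_hom_rel (r := fun x N => x ∈ N) (Submodule.one_le.1 le_rfl) fun j _ _ h =>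
      Submodule.mul_mem_mul (pow_mem_span_pow_image_Iio (hy j) _) h
  rw [Submodule.prod_span] at hprod
  refine Submodule.span_mono (fun x hx => ?_) hprod
  obtain ⟨g, hg, rfl⟩ := (Set.mem_finsetProd _ _ _).1 hx
  choose! l hl using fun j (hj : j ∈ α.support) => hg hj
  refine ⟨Finsupp.indicator α.support fun j _ => l j, fun j hj => ?_, ?_⟩
  · have hjα := Finsupp.support_indicator_subset _ _ hj
    rw [Finsupp.indicator_of_mem hjα]
    exact (hl j hjα).1
  · rw [Finsupp.prod_indicator_index _ fun _ _ => pow_zero _]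
    exact Finset.prod_congr rfl fun j hj => (hl j hj).2.symm

end SpanOfPowers

section Generators

open scoped Finset

variable {F A n} {R : Subalgebra F (⨂[F] _ : Fin n, A)}

lemma permHom_eq_reindex (σ : Equiv.Perm (Fin n)) (x : ⨂[F] _ : Fin n, A) :
    permHom F A n σ x = reindex F (fun _ => A) σ.symm x := by
  suffices h : (permHom F A n σ).toLinearMap = (reindex F (fun _ => A) σ.symm).toLinearMap from
    LinearMap.congr_fun h x
  refine PiTensorProduct.ext (MultilinearMap.ext fun v => ?_)
  change permHom F A n σ (tprod F v) = reindex F (fun _ => A) σ.symm (tprod F v)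
  rw [permHom_tprod, reindex_tprod]
  rfl

lemma TS_le_of_orbitSum_mem [DecidableEq A] [Module.Flat F A] {S : Submonoid A}
    (hS : Submodule.span F (S : Set A) = ⊤)
    (hR : ∀ μ : Multiset A, (∀ x ∈ μ, x ∈ S) → orbitSum F n μ ∈ R) : TS F A n ≤ R := by
  intro x hx
  obtain ⟨K, b, c, hc, rfl⟩ := exists_invariant_expansion x fun σ => by
    simpa only [permHom_eq_reindex, Equiv.symm_symm] using hx σ.symm
  have hspan (j : Fin K) : slots F A n (b j) ∈ Submodule.span R (slots F A n '' S) := by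
    refine Submodule.span_subset_span F R _ ?_
    rw [← AlgHom.coe_toLinearMap, Submodule.span_image, hS]
    exact Submodule.mem_map_of_mem Submodule.mem_top
  choose ρ hρS hρ using fun j => (Finsupp.mem_span_image_iff_linearCombination R).1 (hspan j)
  have hsum := sum_mul_tprod_comp_mem R Finset.univ (fun _ _ _ => Finset.mem_univ _)
    (fun g => algebraMap F R (c g)) (fun g σ => by rw [hc]) b ρ (fun _ _ _ => hρ _)
    fun g _ h hh => hR _ (forall_mem_nontrivialEntries.2 fun k => hρS _ (hh k))
  simpa only [Algebra.smul_def, Subalgebra.coe_algebraMap] using hsum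

variable {ι : Type*} {a : ι → A}

variable (F n) in
/-- The elements `e_i^n(a^α)` with `1 ≤ i ≤ n` for coprime exponent vectors `α`. The degree bound
`max n (s * (n - 1))` uses the number `s` of variables occurring in `α`, so that the family `a` may
be infinite. -/
def coprimeMonomialEsyms (a : ι → A) : Set (⨂[F] _ : Fin n, A) :=
  {x | ∃ (i : ℕ) (α : ι →₀ ℕ), 1 ≤ i ∧ i ≤ n ∧ α.support.gcd α = 1 ∧
    α.degree ≤ max n (#α.support * (n - 1)) ∧ x = esym F A n i (α.prod fun j d => a j ^ d)}

lemma exists_eq_smul_gcd_eq_one {α : ι →₀ ℕ} (hα : α ≠ 0) :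
    ∃ (d : ℕ) (β : ι →₀ ℕ), α = d • β ∧ β.support.gcd β = 1 ∧ β ≤ α := by
  obtain ⟨g, hg, hg1⟩ := Finset.extract_gcd α (Finsupp.support_nonempty_iff.2 hα)
  have hne {j : ι} (hj : j ∈ α.support) : g j ≠ 0 := fun h =>
    Finsupp.mem_support_iff.1 hj (by rw [hg j hj, h, mul_zero])
  let β := Finsupp.indicator α.support fun j _ => g j
  have hβ {j : ι} (hj : j ∈ α.support) : β j = g j := Finsupp.indicator_of_mem hj _
  have hβ0 {j : ι} (hj : j ∉ α.support) : β j = 0 := Finsupp.indicator_of_notMem hj _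
  have heq : α = α.support.gcd α • β := by
    ext j
    by_cases hj : j ∈ α.support
    · rw [Finsupp.smul_apply, hβ hj, hg j hj, smul_eq_mul]
    · rw [Finsupp.smul_apply, hβ0 hj, Finsupp.notMem_support_iff.1 hj, smul_zero]
  have hsupport : β.support = α.support := by
    ext j
    by_cases hj : j ∈ α.support <;> simp [hj, hβ, hβ0, hne]
  refine ⟨_, β, heq, ?_, fun j => ?_⟩
  · rw [hsupport, Finset.gcd_congr rfl fun j hj => hβ hj, hg1]
  · by_cases hj : j ∈ α.support
    · rw [hβ hj]
      exact Nat.le_of_dvd (Nat.pos_of_ne_zero (Finsupp.mem_support_iff.1 hj))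
        ⟨_, (hg j hj).trans (mul_comm _ _)⟩
    · rw [hβ0 hj]
      exact Nat.zero_le _

lemma esym_generator_mem (hR : coprimeMonomialEsyms F n a ⊆ R) (j : ι) {i : ℕ} (hi : 1 ≤ i)
    (hin : i ≤ n) : esym F A n i (a j) ∈ R :=
  hR ⟨i, Finsupp.single j 1, hi, hin, by simp, by simp; lia, by simp⟩

lemma esym_finsuppProd_mem (hR : coprimeMonomialEsyms F n a ⊆ R) {α : ι →₀ ℕ} (hα : α ≠ 0)
    (hαn : ∀ j ∈ α.support, α j < n) (i : ℕ) :
    esym F A n i (α.prod fun j d => a j ^ d) ∈ R := by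
  obtain ⟨d, β, hαβ, hβ, hβα⟩ := exists_eq_smul_gcd_eq_one hα
  have hdeg : β.degree ≤ #β.support * (n - 1) := by
    refine Finset.sum_le_card_nsmul _ _ _ fun j hj => Nat.le_sub_one_of_lt ?_
    exact (hβα j).trans_lt (hαn j (Finsupp.support_mono hβα hj))
  have hpow : α.prod (fun j d => a j ^ d) = β.prod (fun j d => a j ^ d) ^ d := by
    rw [hαβ, Finsupp.prod_of_support_subset _ Finsupp.support_smul _ fun _ _ => pow_zero _,
      Finsupp.prod, ← Finset.prod_pow]
    exact Finset.prod_congr rfl fun j _ => pow_mul' (a j) d (β j)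
  rw [hpow]
  exact esym_pow_mem (fun i hi hin => hR ⟨i, β, hi, hin, hβ, le_max_of_le_right hdeg, rfl⟩) d i

lemma orbitSum_mem_of_coprimeMonomialEsyms_subset [DecidableEq A]
    (hR : coprimeMonomialEsyms F n a ⊆ R) (μ : Multiset A)
    (hμ : ∀ x ∈ μ, x ∈ Submonoid.closure (Set.range a)) : orbitSum F n μ ∈ R := by
  let B := {x | ∃ α : ι →₀ ℕ, (∀ j ∈ α.support, α j < n) ∧ x = α.prod fun j d => a j ^ d}
  refine orbitSum_mem (B := B) ?_ (fun x hx => ?_) ?_ μ hμ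
  · rintro _ ⟨α, -, rfl⟩
    exact Submonoid.mem_closure_range_iff.2 ⟨α, rfl⟩
  · obtain ⟨α, rfl⟩ := Submonoid.mem_closure_range_iff.1 hx
    simp only [map_finsuppProd, map_pow]
    refine Submodule.span_mono ?_ (finsuppProd_pow_mem_span (fun j =>
      slots_pow_mem_span fun i hi hin => esym_generator_mem hR j hi hin) α)
    rintro _ ⟨β, hβ, rfl⟩
    exact ⟨_, ⟨β, hβ, rfl⟩, by simp only [map_finsuppProd, map_pow]⟩
  · rintro _ ⟨α, hα, rfl⟩ hne i
    refine esym_finsuppProd_mem hR ?_ hα i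
    rintro rfl
    exact hne Finsupp.prod_zero_index

end Generators

theorem ts_generated_by_esym_monomials_general [Module.Flat F A] {ι : Type*} (a : ι → A)
    (ha : Algebra.adjoin F (Set.range a) = ⊤) :
    Algebra.adjoin F (coprimeMonomialEsyms F n a) = TS F A n := by
  classical
  refine le_antisymm (Algebra.adjoin_le ?_) (TS_le_of_orbitSum_mem ?_
    (orbitSum_mem_of_coprimeMonomialEsyms_subset Algebra.subset_adjoin))
  · rintro _ ⟨i, α, -, -, -, -, rfl⟩
    exact esym_mem F A n i _
  · rw [← Algebra.adjoin_eq_span, ha, Algebra.top_toSubmodule]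

lemma coprimeMonomialEsyms_subset {m : ℕ} (a : Fin m → A) :
    coprimeMonomialEsyms F n a ⊆
      {x : ⨂[F] _ : Fin n, A |
        ∃ (i : ℕ) (α : Fin m → ℕ),
          1 ≤ i ∧ i ≤ n ∧ Finset.univ.gcd α = 1 ∧
          (∑ j, α j) ≤ max n (m * (n - 1)) ∧
          x = esym F A n i (∏ j, a j ^ α j)} := by
  rintro _ ⟨i, α, hi, hin, hα, hdeg, rfl⟩
  refine ⟨i, α, hi, hin, ?_, ?_, by rw [Finsupp.prod_pow]⟩
  · rw [Finset.gcd_eq_gcd_filter_ne_zero, ← hα]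
    congr 1
    ext j
    simp
  · rw [← Finsupp.degree_eq_sum]
    exact hdeg.trans (max_le_max_left _ (Nat.mul_le_mul_right _ (card_finset_fin_le _)))

/-- **Generators of symmetric tensors.** If the flat commutative `F`-algebra `A` is generated
by `a_1, …, a_m`, then `TS^n_F(A)` is generated as an `F`-algebra by the elements
`e_i^n(a)` (`1 ≤ i ≤ n`), `a` ranging over monomials in the `a_j` with coprime exponents
and total degree at most `max n (m * (n-1))`. -/
theorem ts_generated_by_esym_monomials [Module.Flat F A] (m : ℕ) (a : Fin m → A)
    (ha : Algebra.adjoin F (Set.range a) = ⊤) :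
    Algebra.adjoin F
        {x : ⨂[F] _ : Fin n, A |
          ∃ (i : ℕ) (α : Fin m → ℕ),
            1 ≤ i ∧ i ≤ n ∧ Finset.univ.gcd α = 1 ∧
            (∑ j, α j) ≤ max n (m * (n - 1)) ∧
            x = esym F A n i (∏ j, a j ^ α j)}
      = TS F A n := by
  refine le_antisymm (Algebra.adjoin_le ?_)
    ((ts_generated_by_esym_monomials_general F A n a ha).symm.trans_le
      (Algebra.adjoin_mono (coprimeMonomialEsyms_subset F A n a)))
  rintro _ ⟨i, α, -, -, -, -, rfl⟩
  exact esym_mem F A n i _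

end SymmetricProduct
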